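/- The affine rational points on the curve defined by y² = 2(x³ + 12x² + 48x + 72) are exactly (0, 12), (0, −12), (−4, 4), (−4, −4), and (−6, 0). That is, for x, y ∈ ℚ, y² = 2(x³ + 12x² + 48x + 72) holds if and only if (x, y) is one of these five pairs. -/

import Mathlib

/-!
The substitution `x = 2 u - 4`, `y = 4 t` turns the curve into `t² = u³ + 1`, and `s = u + 1` turns
that into `t² = s (s² - 3 s + 3)`. For `s = p / q` in lowest terms `p q (p² - 3 p q + 3 q²)` is a
square. If `3 ∤ p`, the three factors are pairwise coprime, so `p = a²`, `q = b²` and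
`a⁴ - 3 a² b² + 3 b⁴ = c²`; if `3 ∣ p`, the same holds with `(q, p / 3)` for `(p, q)`.

The quartic equation is treated by Fermat descent through two 2-isogenies. Both `c²` and the
auxiliary square `X⁴ + 6 X² Y² - 3 Y⁴` lead to an equation `v² + 12 B⁴ = u²`, in which `(u ± v) / 2`
are coprime with product `3 B⁴`, so that one is a fourth power and the other three times a fourth
power. Using this twice returns to the original quartic with a smaller `b`, unless `a = b = 1`.
-/

theorem exists_pos_eq_pow_of_mul_eq_pow {a b c : ℤ} {n : ℕ} (hn : n ≠ 0) (ha : 0 < a)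
    (hab : IsCoprime a b) (h : a * b = c ^ n) : ∃ d : ℤ, 0 < d ∧ a = d ^ n := by
  obtain ⟨d, hd⟩ := exists_associated_pow_of_mul_eq_pow ((gcd_isUnit_iff a b).mpr hab) h
  have had : a = |d| ^ n := by
    rw [← abs_pow, abs_eq_abs.mpr (Int.associated_iff.mp hd), abs_of_pos ha]
  have hd0 : d ≠ 0 := by
    rintro rfl
    simp [hn, ha.ne'] at had
  exact ⟨|d|, abs_pos.mpr hd0, had⟩

theorem exists_pow_and_prime_mul_pow_of_mul_eq {p f g B : ℤ} {n : ℕ} (hn : n ≠ 0) (hp : Prime p)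
    (hp0 : 0 < p) (hf : 0 < f) (hg : 0 < g) (hB : 0 < B) (hfg : IsCoprime f g)
    (h : f * g = p * B ^ n) :
    ∃ X Y : ℤ, 0 < X ∧ 0 < Y ∧ X * Y = B ∧
      (f = X ^ n ∧ g = p * Y ^ n ∨ f = p * Y ^ n ∧ g = X ^ n) := by
  wlog hpg : p ∣ g generalizing f g
  · have hpf : p ∣ f := (hp.dvd_or_dvd ⟨_, h⟩).resolve_right hpg
    obtain ⟨X, Y, hX, hY, hXY, hcases⟩ := this hg hf hfg.symm (by rwa [mul_comm]) hpf
    exact ⟨X, Y, hX, hY, hXY, hcases.symm.imp And.symm And.symm⟩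
  obtain ⟨g, rfl⟩ := hpg
  have hprod : f * g = B ^ n := mul_left_cancel₀ hp.ne_zero (by linear_combination h)
  have hcop : IsCoprime f g := hfg.of_mul_right_right
  obtain ⟨X, hX, rfl⟩ := exists_pos_eq_pow_of_mul_eq_pow hn hf hcop hprod
  obtain ⟨Y, hY, rfl⟩ := exists_pos_eq_pow_of_mul_eq_pow hn (pos_of_mul_pos_right hg hp0.le)
    hcop.symm ((mul_comm _ _).trans hprod)
  refine ⟨X, Y, hX, hY, ?_, Or.inl ⟨rfl, rfl⟩⟩
  exact (pow_left_inj₀ (by positivity) hB.le hn).mp ((mul_pow X Y n).trans hprod)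

theorem three_dvd_of_three_dvd_sq_add_sq {a b : ℤ} (h : 3 ∣ a ^ 2 + b ^ 2) : 3 ∣ a := by
  have hmod : ∀ x y : ZMod 3, x ^ 2 + y ^ 2 = 0 → x = 0 := by decide
  have hzero := (ZMod.intCast_zmod_eq_zero_iff_dvd _ 3).mpr h
  push_cast at hzero
  exact (ZMod.intCast_zmod_eq_zero_iff_dvd a 3).mp (hmod _ _ hzero)

theorem exists_param_of_sq_add_twelve_mul_pow_four_eq_sq {u v B : ℤ} (hu : 0 < u) (hB : 0 < B)
    (hv : IsCoprime v (3 * B)) (h : v ^ 2 + 12 * B ^ 4 = u ^ 2) :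
    ∃ X Y : ℤ, 0 < X ∧ 0 < Y ∧ X * Y = B ∧ IsCoprime X (3 * Y) ∧ u = X ^ 4 + 3 * Y ^ 4 ∧
      (v = X ^ 4 - 3 * Y ^ 4 ∨ v = 3 * Y ^ 4 - X ^ 4) := by
  have hparity : Even (u - v) := by
    have : Even (u ^ 2 - v ^ 2) := ⟨6 * B ^ 4, by linear_combination -h⟩
    simpa [Int.even_sub, Int.even_pow] using this
  obtain ⟨g, hg⟩ := hparity
  obtain ⟨f, rfl⟩ : ∃ f, u = f + g := ⟨u - g, by ring⟩
  obtain rfl : v = f - g := by linarith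
  have hfg : f * g = 3 * B ^ 4 := by linarith
  have hpos : 0 < f ∧ 0 < g := by
    rcases mul_pos_iff.mp (hfg ▸ (by positivity : 0 < 3 * B ^ 4)) with hpos | hneg
    · exact hpos
    · omega
  have hcop : IsCoprime f g := by
    have hprod : IsCoprime (f - g) (f * g) := by
      rw [hfg]
      exact hv.of_mul_right_left.mul_right hv.of_mul_right_right.pow_right
    have hsub : IsCoprime (f + g * (-1)) g := by
      simpa [sub_eq_add_neg] using hprod.of_mul_right_right
    exact hsub.of_add_mul_left_left
  obtain ⟨X, Y, hX, hY, hXY, hcases⟩ := exists_pow_and_prime_mul_pow_of_mul_eq four_ne_zero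
    Int.prime_three three_pos hpos.1 hpos.2 hB hcop hfg
  have hXY_cop : IsCoprime (X ^ 4) (3 * Y ^ 4) := by
    rcases hcases with ⟨rfl, rfl⟩ | ⟨rfl, rfl⟩
    exacts [hcop, hcop.symm]
  have hX3Y : IsCoprime X (3 * Y) := by
    rw [show 3 * Y ^ 4 = 3 * Y * Y ^ 3 by ring] at hXY_cop
    exact (IsCoprime.pow_left_iff four_pos).mp hXY_cop.of_mul_right_left
  refine ⟨X, Y, hX, hY, hXY, hX3Y, ?_⟩
  rcases hcases with ⟨rfl, rfl⟩ | ⟨rfl, rfl⟩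
  · exact ⟨rfl, Or.inl rfl⟩
  · exact ⟨add_comm _ _, Or.inr rfl⟩

theorem exists_descent_of_sq_sub_sq_add_eq_sq {k B u : ℤ} (hB : 0 < B) (hu : 0 < u)
    (hk : IsCoprime k (3 * B)) (h : (k ^ 2 - 6 * B ^ 2) ^ 2 + 12 * B ^ 4 = u ^ 2) :
    ∃ T S X : ℤ, 0 < T ∧ 0 < S ∧ 0 < X ∧ IsCoprime T (3 * S) ∧ X * (T * S) = B ∧
      T ^ 4 - 3 * T ^ 2 * S ^ 2 + 3 * S ^ 4 = X ^ 2 ∧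
      k ^ 2 = X ^ 4 + 6 * X ^ 2 * (T * S) ^ 2 - 3 * (T * S) ^ 4 := by
  have hv : IsCoprime (k ^ 2 - 6 * B ^ 2) (3 * B) := by
    rw [show k ^ 2 - 6 * B ^ 2 = k ^ 2 + 3 * B * (-2 * B) by ring]
    exact hk.pow_left.add_mul_left_left _
  obtain ⟨X, Y, hX, hY, rfl, -, -, hvXY⟩ :=
    exists_param_of_sq_add_twelve_mul_pow_four_eq_sq hu hB hv h
  have hkXY : k ^ 2 = X ^ 4 + 6 * X ^ 2 * Y ^ 2 - 3 * Y ^ 4 := by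
    rcases hvXY with hpos | hneg
    · linear_combination hpos
    · have h3k : 3 ∣ k := three_dvd_of_three_dvd_sq_add_sq (b := X ^ 2)
        ⟨Y ^ 4 + 2 * X ^ 2 * Y ^ 2, by linear_combination hneg⟩
      exact absurd (hk.isUnit_of_dvd' h3k (dvd_mul_right 3 _)) Int.prime_three.not_isUnit
  have hkY : IsCoprime k (3 * Y) := by
    rw [show 3 * (X * Y) = 3 * Y * X by ring] at hk
    exact hk.of_mul_right_left
  have hsq : k ^ 2 + 12 * Y ^ 4 = (X ^ 2 + 3 * Y ^ 2) ^ 2 := by linear_combination hkXY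
  obtain ⟨T, S, hT, hS, rfl, hTS, hsum, -⟩ :=
    exists_param_of_sq_add_twelve_mul_pow_four_eq_sq (by positivity) hY hkY hsq
  exact ⟨T, S, X, hT, hS, hX, hTS, rfl, by linear_combination -hsum, hkXY⟩

/- The parity of `b` decides how far `4 c² = (2 a² - 3 b²)² + 3 b⁴` must be scaled to produce the
coefficient `12`. -/
theorem exists_sq_sub_sq_add_eq_sq_of_quartic {a b c : ℤ} (hc : 0 < c) (hab : IsCoprime a (3 * b))
    (h : a ^ 4 - 3 * a ^ 2 * b ^ 2 + 3 * b ^ 4 = c ^ 2) :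
    ∃ k B u : ℤ, 0 < u ∧ IsCoprime k (3 * B) ∧ (k ^ 2 - 6 * B ^ 2) ^ 2 + 12 * B ^ 4 = u ^ 2 ∧
      (k = 2 * a ∧ B = b ∨ k = a ∧ 2 * B = b) := by
  rcases Int.even_or_odd' b with ⟨B, rfl | hodd⟩
  · have haB : IsCoprime a (3 * B) := by
      rw [mul_left_comm] at hab
      exact hab.of_mul_right_right
    exact ⟨a, B, c, hc, haB, by linear_combination h, Or.inr ⟨rfl, rfl⟩⟩
  · have h2b : IsCoprime 2 (3 * b) := ⟨-(3 * B + 1), 1, by rw [hodd]; ring⟩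
    exact ⟨2 * a, b, 4 * c, by positivity, h2b.mul_left hab, by linear_combination 16 * h,
      Or.inl ⟨rfl, rfl⟩⟩

theorem eq_one_and_eq_one_of_quartic {a b c : ℤ} (ha : 0 < a) (hb : 0 < b) (hc : 0 < c)
    (hab : IsCoprime a (3 * b)) (h : a ^ 4 - 3 * a ^ 2 * b ^ 2 + 3 * b ^ 4 = c ^ 2) :
    a = 1 ∧ b = 1 := by
  obtain ⟨k, B, u, hu, hk, hkB, hscale⟩ := exists_sq_sub_sq_add_eq_sq_of_quartic hc hab h
  have hB : 0 < B := by omega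
  obtain ⟨T, S, X, hT, hS, hX, hTS, hXTS, hquartic, hkX⟩ :=
    exists_descent_of_sq_sub_sq_add_eq_sq hB hu hk hkB
  have hTS_one : T = 1 ∧ S = 1 := by
    by_cases hlt : S < b
    · exact eq_one_and_eq_one_of_quartic hT hS hX hTS hquartic
    · have hBb : B ≤ b := by omega
      rw [not_lt] at hlt
      have hXT : X * T = 1 := by
        have hle : X * T ≤ 1 := le_of_mul_le_mul_right (by linarith only [hXTS, hBb, hlt]) hS
        have hpos : 0 < X * T := by positivity
        omega
      have hX1 : X = 1 := Int.eq_one_of_mul_eq_one_right hX.le hXT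
      have hT1 : T = 1 := Int.eq_one_of_mul_eq_one_left hT.le hXT
      subst hX1 hT1
      have hS_sq : S ^ 2 = 1 := mul_left_cancel₀ (pow_ne_zero 2 hS.ne') (by linarith)
      exact ⟨rfl, (pow_eq_one_iff_of_nonneg hS.le two_ne_zero).mp hS_sq⟩
  obtain ⟨rfl, rfl⟩ := hTS_one
  obtain rfl : X = 1 := (pow_eq_one_iff_of_nonneg hX.le two_ne_zero).mp (by linarith)
  have hk2 : k = 2 := by
    have : 0 < k := by omega
    nlinarith
  rcases hscale with ⟨hka, hBb⟩ | ⟨hka, hBb⟩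
  · omega
  · have h2a : 2 ∣ a := by omega
    have h2b : 2 ∣ 3 * b := by omega
    exact absurd (hab.isUnit_of_dvd' h2a h2b) Int.prime_two.not_isUnit
termination_by b.toNat
decreasing_by omega

theorem eq_one_and_eq_one_of_mul_mul_eq_sq {p q z : ℤ} (hp : 0 < p) (hq : 0 < q)
    (hpq : IsCoprime p (3 * q)) (h : p * q * (p ^ 2 - 3 * p * q + 3 * q ^ 2) = z ^ 2) :
    p = 1 ∧ q = 1 := by
  have hr : 0 < p ^ 2 - 3 * p * q + 3 * q ^ 2 := by nlinarith [sq_nonneg (2 * p - 3 * q)]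
  have hpq' : IsCoprime p q := hpq.of_mul_right_right
  obtain ⟨r, hr_def⟩ : ∃ r, r = p ^ 2 - 3 * p * q + 3 * q ^ 2 := ⟨_, rfl⟩
  rw [← hr_def] at h hr
  have hrp : IsCoprime r p := by
    rw [hr_def, show p ^ 2 - 3 * p * q + 3 * q ^ 2 = 3 * q * q + p * (p - 3 * q) by ring]
    exact (hpq.symm.mul_left hpq'.symm).add_mul_left_left _
  have hrq : IsCoprime r q := by
    rw [hr_def, show p ^ 2 - 3 * p * q + 3 * q ^ 2 = p ^ 2 + q * (3 * q - 3 * p) by ring]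
    exact hpq'.pow_left.add_mul_left_left _
  obtain ⟨c, hc, hrc⟩ := exists_pos_eq_pow_of_mul_eq_pow (b := p * q) (c := z) two_ne_zero hr
    (hrp.mul_right hrq) (by linarith)
  obtain ⟨a, ha, rfl⟩ := exists_pos_eq_pow_of_mul_eq_pow (b := q * r) (c := z) two_ne_zero hp
    (hpq'.mul_right hrp.symm) (by linarith)
  obtain ⟨b, hb, rfl⟩ := exists_pos_eq_pow_of_mul_eq_pow (b := a ^ 2 * r) (c := z) two_ne_zero hq
    (hpq'.symm.mul_right hrq.symm) (by linarith)
  have hab : IsCoprime a (3 * b) := by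
    rw [show 3 * b ^ 2 = 3 * b * b by ring] at hpq
    exact (IsCoprime.pow_left_iff two_pos).mp hpq.of_mul_right_left
  obtain ⟨rfl, rfl⟩ := eq_one_and_eq_one_of_quartic ha hb hc hab
    (by linear_combination hrc - hr_def)
  exact ⟨one_pow 2, one_pow 2⟩

theorem eq_one_or_eq_three_of_mul_mul_eq_sq {p q z : ℤ} (hp : 0 < p) (hq : 0 < q)
    (hpq : IsCoprime p q) (h : p * q * (p ^ 2 - 3 * p * q + 3 * q ^ 2) = z ^ 2) :
    q = 1 ∧ (p = 1 ∨ p = 3) := by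
  by_cases h3p : 3 ∣ p
  · obtain ⟨m, rfl⟩ := h3p
    have h3z : 3 ∣ z := Int.prime_three.dvd_of_dvd_pow (n := 2)
      (h ▸ ((dvd_mul_right 3 m).mul_right q).mul_right _)
    obtain ⟨w, rfl⟩ := h3z
    obtain ⟨rfl, rfl⟩ := eq_one_and_eq_one_of_mul_mul_eq_sq (z := w) hq
      (pos_of_mul_pos_right hp zero_le_three) hpq.symm (by linarith)
    exact ⟨rfl, Or.inr rfl⟩
  · have hp3 : IsCoprime p 3 := (Int.prime_three.coprime_iff_not_dvd.mpr h3p).symm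
    obtain ⟨rfl, rfl⟩ := eq_one_and_eq_one_of_mul_mul_eq_sq hp hq (hp3.mul_right hpq) h
    exact ⟨rfl, Or.inl rfl⟩

theorem isSquare_num_mul_den_mul {s t : ℚ} (h : t ^ 2 = s * (s ^ 2 - 3 * s + 3)) :
    IsSquare (s.num * s.den * (s.num ^ 2 - 3 * s.num * s.den + 3 * s.den ^ 2)) := by
  rw [← Rat.isSquare_intCast_iff]
  refine ⟨t * s.den ^ 2, ?_⟩
  push_cast
  rw [← Rat.mul_den_eq_num s]
  linear_combination -(s.den : ℚ) ^ 4 * h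

theorem eq_zero_or_one_or_three_of_sq_eq {s t : ℚ} (h : t ^ 2 = s * (s ^ 2 - 3 * s + 3)) :
    s = 0 ∨ s = 1 ∨ s = 3 := by
  have hquad : 0 < s ^ 2 - 3 * s + 3 := by nlinarith [sq_nonneg (2 * s - 3)]
  have hs : 0 ≤ s := nonneg_of_mul_nonneg_left (h ▸ sq_nonneg t) hquad
  refine hs.eq_or_lt.imp Eq.symm fun hs_pos => ?_
  obtain ⟨z, hz⟩ := isSquare_num_mul_den_mul h
  obtain ⟨hden, hnum⟩ := eq_one_or_eq_three_of_mul_mul_eq_sq (Rat.num_pos.mpr hs_pos)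
    (by exact_mod_cast s.den_pos) s.isCoprime_num_den (hz.trans (sq z).symm)
  have hs_num : (s.num : ℚ) = s := Rat.coe_int_num_of_den_eq_one (by exact_mod_cast hden)
  rw [← hs_num]
  exact_mod_cast hnum

theorem sq_eq_cube_add_one_iff (u t : ℚ) :
    t ^ 2 = u ^ 3 + 1 ↔
      (u = -1 ∧ t = 0) ∨ (u = 0 ∧ (t = 1 ∨ t = -1)) ∨ (u = 2 ∧ (t = 3 ∨ t = -3)) := by
  constructor
  · intro h
    rcases eq_zero_or_one_or_three_of_sq_eq (s := u + 1) (t := t) (by linear_combination h)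
      with hu | hu | hu
    · obtain rfl : u = -1 := by linarith
      exact Or.inl ⟨rfl, pow_eq_zero_iff two_ne_zero |>.mp (by linarith)⟩
    · obtain rfl : u = 0 := by linarith
      exact Or.inr (Or.inl ⟨rfl, sq_eq_sq_iff_eq_or_eq_neg.mp (by linarith)⟩)
    · obtain rfl : u = 2 := by linarith
      exact Or.inr (Or.inr ⟨rfl, sq_eq_sq_iff_eq_or_eq_neg.mp (by linarith)⟩)
  · rintro (⟨rfl, rfl⟩ | ⟨rfl, rfl | rfl⟩ | ⟨rfl, rfl | rfl⟩) <;> norm_num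

/-- The affine rational points on the curve
`y² = 2(x³ + 12x² + 48x + 72)` (a model of the elliptic curve 36a1) are exactly
`(0, ±12)`, `(−4, ±4)` and `(−6, 0)`. -/
theorem stmt_15 (x y : ℚ) :
    y ^ 2 = 2 * (x ^ 3 + 12 * x ^ 2 + 48 * x + 72) ↔
      (x = 0 ∧ y = 12) ∨ (x = 0 ∧ y = -12) ∨ (x = -4 ∧ y = 4) ∨ (x = -4 ∧ y = -4) ∨
        (x = -6 ∧ y = 0) := by
  obtain ⟨u, rfl⟩ : ∃ u, x = 2 * u - 4 := ⟨(x + 4) / 2, by ring⟩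
  obtain ⟨t, rfl⟩ : ∃ t, y = 4 * t := ⟨y / 4, by ring⟩
  have hcurve : (4 * t) ^ 2 =
        2 * ((2 * u - 4) ^ 3 + 12 * (2 * u - 4) ^ 2 + 48 * (2 * u - 4) + 72) ↔
      t ^ 2 = u ^ 3 + 1 := by
    constructor <;> intro h <;> linarith
  rw [hcurve, sq_eq_cube_add_one_iff]
  constructor
  · rintro (⟨rfl, rfl⟩ | ⟨rfl, rfl | rfl⟩ | ⟨rfl, rfl | rfl⟩) <;> norm_num
  · rintro (⟨hu, ht⟩ | ⟨hu, ht⟩ | ⟨hu, ht⟩ | ⟨hu, ht⟩ | ⟨hu, ht⟩) <;> grind
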